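/- arXiv:math/0212105 — 2 statements merged into one kernel-verified Lean document; each statement's English description precedes it below -/
import Mathlib

section
/- Let s₀ ∈ ℝ, let g : ℝ → ℝ have bounded variation on [0,∞) with g(x) → 0 as x → ∞, and let h : ℝ → ℂ be locally integrable on [0,∞). Suppose there are constants M, δ, K > 0 such that for all s with |s − s₀| < δ and all M₂ ≥ M₁ > M one has |∫_{M₁}^{M₂} e^{-isx} h(x) dx| < K. Set f = g·h. Then for every s with |s − s₀| < δ the improper integral F(s) := lim_{T→∞} ∫_0^T e^{-isx} f(x) dx exists, and the function F is continuous at s₀. -/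
open MeasureTheory Filter

/-!
The proof is Dirichlet's test, made uniform in the parameter. By Bonnet's inequality, if every tail
integral `∫ x in y..b, φ x` is at most `K` in norm, then `‖∫ x in a..b, u x • φ x‖ ≤ K * u b` for
nonnegative monotone `u`: in the layer cake formula each superlevel set of `u` cuts `(a, b]` in a
tail. Applied to the two parts of the Jordan decomposition of `g`, this gives
`‖∫ x in a..b, g x • φ x‖ ≤ K * (|g a| + V)` with `V` the variation of `g` on `[a, b]`. Both `|g a|`
and the variation of `g` on `[a, ∞)` tend to `0` as `a → ∞`, so the partial integrals of `g • φ` are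
Cauchy, uniformly over any family of functions `φ` with a common bound `K`, and a uniform limit of
functions continuous in the parameter is continuous.
-/

section BoundedVariationTransform

open Set
open scoped Topology

theorem tendsto_toReal_eVariationOn_Ici_atTop {α F : Type*} [LinearOrder α]
    [PseudoEMetricSpace F] {g : α → F} {a : α} (hg : BoundedVariationOn g (Ici a)) :
    Tendsto (fun x ↦ (eVariationOn g (Ici x)).toReal) atTop (𝓝 0) := by
  have htail : Tendsto (fun x ↦ eVariationOn g (Ici a ∩ Ici x)) atTop (𝓝 0) :=
    hg.tendsto_eVariationOn_Ici_zero_of_filter atTop fun y _ ↦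
      inter_mem (Ici_mem_atTop a) (Ici_mem_atTop y)
  refine ((ENNReal.tendsto_toReal ENNReal.zero_ne_top).comp htail).congr' ?_
  filter_upwards [eventually_ge_atTop a] with x hx
  simp [Ici_inter_Ici, hx]

theorem uniformCauchySeqOn_atTop_of_dist_le {α ι Y : Type*} [LinearOrder α] [Nonempty α]
    [PseudoMetricSpace Y] {G : α → ι → Y} {S : Set ι} {r : α → ℝ} (hr : Tendsto r atTop (𝓝 0))
    (hG : ∀ᶠ m in atTop, ∀ n ≥ m, ∀ s ∈ S, dist (G m s) (G n s) ≤ r m) :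
    UniformCauchySeqOn G atTop S := by
  rw [Metric.uniformCauchySeqOn_iff]
  intro ε hε
  obtain ⟨N, hN⟩ := eventually_atTop.1 ((hr.eventually_lt_const hε).and hG)
  refine ⟨N, fun m hm n hn s hs ↦ ?_⟩
  wlog hmn : m ≤ n generalizing m n
  · rw [dist_comm]
    exact this n hn m hm (le_of_not_ge hmn)
  obtain ⟨hrm, hGm⟩ := hN m hm
  exact (hGm n hmn s hs).trans_lt hrm

variable {E : Type*} [NormedAddCommGroup E] [NormedSpace ℝ E]

theorem integral_smul_eq_integral_setIntegral_superlevel [CompleteSpace E] {α : Type*}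
    [MeasurableSpace α] {μ : Measure α} [SFinite μ] {u : α → ℝ} {φ : α → E} {C : ℝ}
    (hu : Measurable u) (hC : 0 ≤ C) (huC : ∀ᵐ x ∂μ, u x ∈ Icc 0 C) (hφ : Integrable φ μ) :
    ∫ x, u x • φ x ∂μ = ∫ t in 0..C, ∫ x in {x | t ≤ u x}, φ x ∂μ := by
  have hlayer : ∀ᵐ x ∂μ,
      u x • φ x = ∫ t in Ioc 0 C, {z : α × ℝ | z.2 ≤ u z.1}.indicator (fun z ↦ φ z.1) (x, t) := by
    filter_upwards [huC] with x hx
    calc u x • φ x = ∫ _ in Ioc 0 C ∩ Iic (u x), φ x := by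
          simp [Ioc_inter_Iic, hx.1, hx.2]
      _ = ∫ t in Ioc 0 C, (Iic (u x)).indicator (fun _ ↦ φ x) t :=
          (setIntegral_indicator measurableSet_Iic).symm
  have hmeas : MeasurableSet {z : α × ℝ | z.2 ≤ u z.1} :=
    measurableSet_le measurable_snd (hu.comp measurable_fst)
  have hint : Integrable ({z : α × ℝ | z.2 ≤ u z.1}.indicator fun z ↦ φ z.1)
      (μ.prod (volume.restrict (Ioc 0 C))) :=
    (hφ.comp_fst _).indicator hmeas
  calc ∫ x, u x • φ x ∂μ
      = ∫ x, (∫ t in Ioc 0 C,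
          {z : α × ℝ | z.2 ≤ u z.1}.indicator (fun z ↦ φ z.1) (x, t)) ∂μ := integral_congr_ae hlayer
    _ = ∫ t in Ioc 0 C, ∫ x, {x | t ≤ u x}.indicator φ x ∂μ :=
        integral_integral_swap hint
    _ = ∫ t in 0..C, ∫ x in {x | t ≤ u x}, φ x ∂μ := by
        rw [intervalIntegral.integral_of_le hC]
        simp only [integral_indicator (measurableSet_le measurable_const hu)]

theorem exists_Ioc_inter_ae_eq_Ioc_of_isUpperSet {s : Set ℝ} {a b : ℝ} (hs : IsUpperSet s)
    (hab : a ≤ b) (μ : Measure ℝ) [NullSingletonClass μ] :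
    ∃ y ∈ Icc a b, (Ioc a b ∩ s : Set ℝ) =ᵐ[μ] Ioc y b := by
  have hbIcc : b ∈ Icc a b := right_mem_Icc.2 hab
  by_cases hb : b ∈ s
  · have hbdd : BddBelow (Icc a b ∩ s) := bddBelow_Icc.mono inter_subset_left
    have hne : (Icc a b ∩ s).Nonempty := ⟨b, hbIcc, hb⟩
    set y := sInf (Icc a b ∩ s)
    have hsub : Ioc y b ⊆ Ioc a b ∩ s := fun x hx ↦ by
      obtain ⟨z, hz, hzx⟩ := exists_lt_of_csInf_lt hne hx.1
      exact ⟨⟨hz.1.1.trans_lt hzx, hx.2⟩, hs hzx.le hz.2⟩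
    have hsup : Ioc a b ∩ s ⊆ Icc y b := fun x hx ↦
      ⟨csInf_le hbdd ⟨Ioc_subset_Icc_self hx.1, hx.2⟩, hx.1.2⟩
    exact ⟨y, ⟨le_csInf hne fun x hx ↦ hx.1.1, csInf_le hbdd ⟨hbIcc, hb⟩⟩,
      (hsup.eventuallyLE.trans Ioc_ae_eq_Icc.symm.le).antisymm hsub.eventuallyLE⟩
  · have hempty : Ioc a b ∩ s = ∅ :=
      eq_empty_of_forall_notMem fun x hx ↦ hb (hs hx.1.2 hx.2)
    exact ⟨b, hbIcc, by simp [hempty]⟩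

theorem norm_intervalIntegral_smul_le_of_monotone [CompleteSpace E] {u : ℝ → ℝ} {φ : ℝ → E}
    {a b K : ℝ} (hu : Monotone u) (hua : 0 ≤ u a) (hab : a ≤ b) (hφ : IntegrableOn φ (Icc a b))
    (hK : ∀ y ∈ Icc a b, ‖∫ x in y..b, φ x‖ ≤ K) :
    ‖∫ x in a..b, u x • φ x‖ ≤ K * u b := by
  have hub : 0 ≤ u b := hua.trans (hu hab)
  have hsuperlevel (t : ℝ) : ‖∫ x in {x | t ≤ u x}, φ x ∂volume.restrict (Ioc a b)‖ ≤ K := by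
    obtain ⟨y, hy, hae⟩ :=
      exists_Ioc_inter_ae_eq_Ioc_of_isUpperSet ((isUpperSet_Ici t).preimage hu) hab volume
    calc ‖∫ x in {x | t ≤ u x}, φ x ∂volume.restrict (Ioc a b)‖
        = ‖∫ x in Ioc a b ∩ u ⁻¹' Ici t, φ x‖ := by
          rw [Measure.restrict_restrict (measurableSet_le measurable_const hu.measurable),
            inter_comm]
          rfl
      _ = ‖∫ x in y..b, φ x‖ := by
          rw [setIntegral_congr_set hae, ← intervalIntegral.integral_of_le hy.2]
      _ ≤ K := hK y hy
  have hrange : ∀ᵐ x ∂volume.restrict (Ioc a b), u x ∈ Icc 0 (u b) :=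
    ae_restrict_of_forall_mem measurableSet_Ioc fun x hx ↦ ⟨hua.trans (hu hx.1.le), hu hx.2⟩
  rw [intervalIntegral.integral_of_le hab, integral_smul_eq_integral_setIntegral_superlevel
    hu.measurable hub hrange (hφ.mono_set Ioc_subset_Icc_self)]
  simpa [abs_of_nonneg hub] using
    intervalIntegral.norm_integral_le_of_norm_le_const (a := 0) (b := u b) fun t _ ↦ hsuperlevel t

theorem norm_intervalIntegral_smul_le_of_monotoneOn [CompleteSpace E] {u : ℝ → ℝ} {φ : ℝ → E}
    {a b K : ℝ} (hu : MonotoneOn u (Icc a b)) (hua : 0 ≤ u a) (hab : a ≤ b)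
    (hφ : IntegrableOn φ (Icc a b)) (hK : ∀ y ∈ Icc a b, ‖∫ x in y..b, φ x‖ ≤ K) :
    ‖∫ x in a..b, u x • φ x‖ ≤ K * u b := by
  obtain ⟨v, hv, huv⟩ := hu.exists_monotone_extension
    (hu.map_bddBelow subset_rfl ⟨a, fun _ hx ↦ hx.1, left_mem_Icc.2 hab⟩)
    (hu.map_bddAbove subset_rfl ⟨b, fun _ hx ↦ hx.2, right_mem_Icc.2 hab⟩)
  have hint : ∫ x in a..b, u x • φ x = ∫ x in a..b, v x • φ x :=
    intervalIntegral.integral_congr fun x hx ↦ by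
      simp only [huv (uIcc_of_le hab ▸ hx)]
  rw [hint, huv (right_mem_Icc.2 hab)]
  exact norm_intervalIntegral_smul_le_of_monotone hv (huv (left_mem_Icc.2 hab) ▸ hua) hab hφ hK

theorem exists_monotoneOn_sub_monotoneOn_of_boundedVariationOn_Icc {g : ℝ → ℝ} {a b : ℝ}
    (hab : a ≤ b) (hg : BoundedVariationOn g (Icc a b)) :
    ∃ p q : ℝ → ℝ, MonotoneOn p (Icc a b) ∧ MonotoneOn q (Icc a b) ∧ p a = 0 ∧ q a = 0 ∧
      (∀ x, g x = g a + (p x - q x)) ∧ p b + q b = (eVariationOn g (Icc a b)).toReal := by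
  obtain ⟨p, q, hp, hq, rfl, hvar⟩ :=
    hg.locallyBoundedVariationOn.exists_monotoneOn_sub_monotoneOn'
  refine ⟨fun x ↦ p x - p a, fun x ↦ q x - q a,
    fun x hx y hy hxy ↦ sub_le_sub_right (hp hx hy hxy) _,
    fun x hx y hy hxy ↦ sub_le_sub_right (hq hx hy hxy) _, sub_self _, sub_self _, fun x ↦ ?_, ?_⟩
  · simp only [Pi.sub_apply]
    ring
  · rw [hvar a (left_mem_Icc.2 hab) b (right_mem_Icc.2 hab), variationOnFromTo.eq_of_le _ _ hab,
      inter_self]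

theorem integrableOn_smul_of_monotoneOn_Icc {u : ℝ → ℝ} {φ : ℝ → E} {a b : ℝ} {μ : Measure ℝ}
    (hu : MonotoneOn u (Icc a b)) (hφ : IntegrableOn φ (Icc a b) μ) :
    IntegrableOn (fun x ↦ u x • φ x) (Icc a b) μ := by
  refine hφ.bdd_smul (max |u a| |u b|)
    (aemeasurable_restrict_of_monotoneOn measurableSet_Icc hu).aestronglyMeasurable
    (ae_restrict_of_forall_mem measurableSet_Icc fun x hx ↦ ?_)
  have hab : a ≤ b := hx.1.trans hx.2
  exact abs_le_max_abs_abs (hu (left_mem_Icc.2 hab) hx hx.1) (hu hx (right_mem_Icc.2 hab) hx.2)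

theorem integrableOn_smul_of_boundedVariationOn_Icc {g : ℝ → ℝ} {φ : ℝ → E} {a b : ℝ}
    {μ : Measure ℝ} (hg : BoundedVariationOn g (Icc a b)) (hφ : IntegrableOn φ (Icc a b) μ) :
    IntegrableOn (fun x ↦ g x • φ x) (Icc a b) μ := by
  obtain ⟨p, q, hp, hq, rfl⟩ := hg.locallyBoundedVariationOn.exists_monotoneOn_sub_monotoneOn
  simp only [Pi.sub_apply, sub_smul]
  exact (integrableOn_smul_of_monotoneOn_Icc hp hφ).sub (integrableOn_smul_of_monotoneOn_Icc hq hφ)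

theorem norm_intervalIntegral_smul_le_of_boundedVariationOn [CompleteSpace E] {g : ℝ → ℝ}
    {φ : ℝ → E} {a b K : ℝ} (hg : BoundedVariationOn g (Icc a b)) (hab : a ≤ b)
    (hφ : IntegrableOn φ (Icc a b)) (hK : ∀ y ∈ Icc a b, ‖∫ x in y..b, φ x‖ ≤ K) :
    ‖∫ x in a..b, g x • φ x‖ ≤ K * (|g a| + (eVariationOn g (Icc a b)).toReal) := by
  obtain ⟨p, q, hp, hq, hpa, hqa, hgpq, hvar⟩ :=
    exists_monotoneOn_sub_monotoneOn_of_boundedVariationOn_Icc hab hg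
  have hint {f : ℝ → E} (hf : IntegrableOn f (Icc a b)) : IntervalIntegrable f volume a b :=
    (intervalIntegrable_iff_integrableOn_Icc_of_le hab).2 hf
  have hpφ := hint (integrableOn_smul_of_monotoneOn_Icc hp hφ)
  have hqφ := hint (integrableOn_smul_of_monotoneOn_Icc hq hφ)
  have hsplit : ∫ x in a..b, g x • φ x =
      g a • (∫ x in a..b, φ x) + ((∫ x in a..b, p x • φ x) - ∫ x in a..b, q x • φ x) := by
    rw [← intervalIntegral.integral_smul, ← intervalIntegral.integral_sub hpφ hqφ,
      ← intervalIntegral.integral_add (f := fun x ↦ g a • φ x) ((hint hφ).smul _) (hpφ.sub hqφ)]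
    exact intervalIntegral.integral_congr fun x _ ↦ by
      simp only [hgpq x, add_smul, sub_smul]
  calc ‖∫ x in a..b, g x • φ x‖
      ≤ ‖g a • ∫ x in a..b, φ x‖ + (‖∫ x in a..b, p x • φ x‖ + ‖∫ x in a..b, q x • φ x‖) := by
        rw [hsplit]
        exact (norm_add_le _ _).trans (add_le_add_right (norm_sub_le _ _) _)
    _ ≤ |g a| * K + (K * p b + K * q b) := by
        rw [norm_smul, Real.norm_eq_abs]
        gcongr
        · exact hK a (left_mem_Icc.2 hab)
        · exact norm_intervalIntegral_smul_le_of_monotoneOn hp hpa.ge hab hφ hK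
        · exact norm_intervalIntegral_smul_le_of_monotoneOn hq hqa.ge hab hφ hK
    _ = K * (|g a| + (eVariationOn g (Icc a b)).toReal) := by
        rw [← hvar]
        ring

theorem exists_tendstoUniformlyOn_intervalIntegral_smul [CompleteSpace E] {ι : Type*}
    {g : ℝ → ℝ} {φ : ι → ℝ → E} {S : Set ι} {a M K : ℝ} (hg : BoundedVariationOn g (Ici a))
    (hg0 : Tendsto g atTop (𝓝 0)) (hφ : ∀ s ∈ S, ∀ b, IntegrableOn (φ s) (Icc a b))
    (hK : ∀ s ∈ S, ∀ M₁ M₂, M < M₁ → M₁ ≤ M₂ → ‖∫ x in M₁..M₂, φ s x‖ ≤ K) :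
    ∃ F : ι → E, TendstoUniformlyOn (fun T s ↦ ∫ x in a..T, g x • φ s x) F atTop S := by
  set r : ℝ → ℝ := fun m ↦ K * (|g m| + (eVariationOn g (Ici m)).toReal)
  have hr : Tendsto r atTop (𝓝 0) := by
    simpa using (hg0.abs.add (tendsto_toReal_eVariationOn_Ici_atTop hg)).const_mul K
  have hint {s : ι} (hs : s ∈ S) {b : ℝ} (hb : a ≤ b) :
      IntervalIntegrable (fun x ↦ g x • φ s x) volume a b :=
    (intervalIntegrable_iff_integrableOn_Icc_of_le hb).2 <|
      integrableOn_smul_of_boundedVariationOn_Icc (hg.mono Icc_subset_Ici_self) (hφ s hs b)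
  have htail {s : ι} (hs : s ∈ S) {m n : ℝ} (hm : a ≤ m) (hMm : M < m) (hmn : m ≤ n) :
      dist (∫ x in a..m, g x • φ s x) (∫ x in a..n, g x • φ s x) ≤ r m := by
    have hK0 : 0 ≤ K := (norm_nonneg _).trans (hK s hs m m hMm le_rfl)
    have hgm : BoundedVariationOn g (Ici m) := hg.mono (Ici_subset_Ici.2 hm)
    rw [dist_comm, dist_eq_norm,
      intervalIntegral.integral_interval_sub_left (hint hs (hm.trans hmn)) (hint hs hm)]
    calc ‖∫ x in m..n, g x • φ s x‖
        ≤ K * (|g m| + (eVariationOn g (Icc m n)).toReal) :=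
          norm_intervalIntegral_smul_le_of_boundedVariationOn (hgm.mono Icc_subset_Ici_self) hmn
            ((hφ s hs n).mono_set (Icc_subset_Icc_left hm))
            fun y hy ↦ hK s hs y n (hMm.trans_le hy.1) hy.2
      _ ≤ r m := by
          simp only [r]
          gcongr
          exact eVariationOn.mono g Icc_subset_Ici_self
  have hcauchy : UniformCauchySeqOn (fun T s ↦ ∫ x in a..T, g x • φ s x) atTop S := by
    refine uniformCauchySeqOn_atTop_of_dist_le hr ?_
    filter_upwards [eventually_ge_atTop a, eventually_gt_atTop M] with m ham hMm n hmn s hs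
    exact htail hs ham hMm hmn
  exact ⟨fun s ↦ limUnder atTop fun T ↦ ∫ x in a..T, g x • φ s x,
    hcauchy.tendstoUniformlyOn_of_tendsto fun s hs ↦ (hcauchy.cauchySeq hs).tendsto_limUnder⟩

theorem continuous_intervalIntegral_smul {𝕜 X : Type*} [NormedField 𝕜] [NormedSpace 𝕜 E]
    [TopologicalSpace X] [FirstCountableTopology X] {k : X → ℝ → 𝕜} {f : ℝ → E} {a b : ℝ}
    {μ : Measure ℝ} (hk : Continuous k.uncurry) (hf : IntervalIntegrable f μ a b) :
    Continuous fun s ↦ ∫ x in a..b, k s x • f x ∂μ := by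
  refine continuous_iff_continuousAt.2 fun s₀ ↦ ?_
  have hks (s : X) : Continuous (k s) := by fun_prop
  obtain ⟨C, hC⟩ := isCompact_uIcc.exists_bound_of_continuousOn (hks s₀).continuousOn
  have hbound : ∀ᶠ s in 𝓝 s₀, ∀ x ∈ uIcc a b, ‖k s x‖ < C + 1 :=
    isCompact_uIcc.eventually_forall_of_forall_eventually fun x hx ↦
      hk.norm.continuousAt.eventually_lt_const ((hC x hx).trans_lt (lt_add_one C))
  refine intervalIntegral.continuousAt_of_dominated_interval (bound := fun x ↦ (C + 1) * ‖f x‖)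
    (.of_forall fun s ↦ (hks s).aestronglyMeasurable.smul hf.def'.aestronglyMeasurable) ?_
    (hf.norm.const_mul _) (.of_forall fun x _ ↦ ?_)
  · filter_upwards [hbound] with s hs
    refine .of_forall fun x hx ↦ ?_
    rw [norm_smul]
    gcongr
    exact (hs x (uIoc_subset_uIcc hx)).le
  · have : Continuous fun s ↦ k s x := by fun_prop
    fun_prop

theorem stmt6_general [CompleteSpace E] {𝕜 X : Type*} [NormedField 𝕜] [NormedSpace 𝕜 E]
    [SMulCommClass ℝ 𝕜 E] [TopologicalSpace X] [FirstCountableTopology X] {k : X → ℝ → 𝕜}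
    {g : ℝ → ℝ} {h : ℝ → E} {S : Set X} {a M K : ℝ} (hk : Continuous k.uncurry)
    (hg : BoundedVariationOn g (Ici a)) (hg0 : Tendsto g atTop (𝓝 0))
    (hh : ∀ b, IntegrableOn h (Icc a b))
    (hbound : ∀ s ∈ S, ∀ M₁ M₂, M < M₁ → M₁ ≤ M₂ → ‖∫ x in M₁..M₂, k s x • h x‖ ≤ K) :
    ∃ F : X → E,
      TendstoUniformlyOn (fun T s ↦ ∫ x in a..T, k s x • g x • h x) F atTop S ∧
      ContinuousOn F S := by
  have hkh (s : X) (b : ℝ) : IntegrableOn (fun x ↦ k s x • h x) (Icc a b) :=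
    (hh b).continuousOn_smul (by fun_prop) isCompact_Icc
  obtain ⟨F, hF⟩ :=
    exists_tendstoUniformlyOn_intervalIntegral_smul hg hg0 (fun s _ ↦ hkh s) hbound
  simp only [smul_comm (_ : ℝ) (_ : 𝕜)] at hF
  refine ⟨F, hF, hF.continuousOn (Eventually.frequently ?_)⟩
  filter_upwards [eventually_ge_atTop a] with T hT
  have hgh : IntervalIntegrable (fun x ↦ g x • h x) volume a T :=
    (intervalIntegrable_iff_integrableOn_Icc_of_le hT).2 <|
      integrableOn_smul_of_boundedVariationOn_Icc (hg.mono Icc_subset_Ici_self) (hh T)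
  exact (continuous_intervalIntegral_smul hk hgh).continuousOn

end BoundedVariationTransform

/-- Proposition 3(a) (Chartier–Dirichlet type test for continuity): with `g` of bounded
variation on `[0,∞)` tending to `0` at `∞`, `h` locally integrable on `[0,∞)`, and the
partial integrals of `e^{-isx} h(x)` uniformly bounded near `s₀`, the transform
`F(s) = lim_{T→∞} ∫_0^T e^{-isx} g(x) h(x) dx` exists near `s₀` and is continuous at `s₀`. -/
theorem stmt6 (s₀ : ℝ) (g : ℝ → ℝ) (h : ℝ → ℂ)
    (hg : BoundedVariationOn g (Set.Ici 0))
    (hg0 : Tendsto g atTop (nhds 0))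
    (hh : ∀ a b : ℝ, 0 ≤ a → IntegrableOn h (Set.Icc a b))
    (M δ K : ℝ) (hM : 0 < M) (hδ : 0 < δ) (hK : 0 < K)
    (hbound : ∀ s : ℝ, |s - s₀| < δ → ∀ M₁ M₂ : ℝ, M < M₁ → M₁ ≤ M₂ →
      ‖∫ x in M₁..M₂, Complex.exp (-(Complex.I * (s : ℂ) * (x : ℂ))) * h x‖ < K) :
    ∃ F : ℝ → ℂ,
      (∀ s : ℝ, |s - s₀| < δ →
        Tendsto (fun T : ℝ => ∫ x in (0:ℝ)..T,
            Complex.exp (-(Complex.I * (s : ℂ) * (x : ℂ))) * (((g x : ℝ) : ℂ) * h x))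
          atTop (nhds (F s))) ∧
      ContinuousWithinAt F {s : ℝ | |s - s₀| < δ} s₀ := by
  obtain ⟨F, hF, hFc⟩ := stmt6_general (S := {s : ℝ | |s - s₀| < δ})
    (k := fun s x : ℝ ↦ Complex.exp (-(Complex.I * (s : ℂ) * (x : ℂ)))) (by fun_prop) hg hg0
    (fun b ↦ hh 0 b le_rfl) fun s hs M₁ M₂ h₁ h₂ ↦ (hbound s hs M₁ M₂ h₁ h₂).le
  exact ⟨F, fun s hs ↦ hF.tendsto_at hs, hFc s₀ (by simpa using hδ)⟩
end

section
/- Let f : ℝ → ℂ be locally integrable such that F(x) = ∫_0^x f has finite limits as x → ∞ and as x → −∞, and let g : ℝ → ℝ have bounded variation on ℝ. Then for every x ∈ ℝ the improper convolution f∗g(x) = lim_{T₁,T₂→∞} ∫_{-T₁}^{T₂} f(x−t) g(t) dt exists, and |f∗g(x)| ≤ |lim_{T₁,T₂→∞} ∫_{-T₁}^{T₂} f| · inf_{t∈ℝ} |g(t)| + ‖f‖_A · V_ℝ g, where ‖f‖_A = sup_{a ≤ b} |∫_a^b f| (which is finite under the stated hypothesis). -/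
open MeasureTheory Filter

open Set
open scoped Topology Interval

/-!
For `g` monotone and `s ∈ [a, b]`, the function `g - g s` has one sign on each side of `s`, and its
superlevel sets there are intervals. Writing it as an integral of indicators of these intervals (the
layer cake formula) and exchanging the integrals bounds `∫ₐᵇ (g - g s) f` by the largest integral of
`f` over a subinterval times `g b - g a`. The Jordan decomposition extends this to
`|∫ₐᵇ g f - g s ∫ₐᵇ f| ≤ A · V g` for `g` of bounded variation. On intervals near `±∞` it is the
Cauchy criterion for `∫ g f`; as the interval exhausts the line it gives
`|∫ g f - g s ∫ f| ≤ ‖f‖_A · V g` for every `s`. Reflections and translations of `f` do not change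
`∫ f` or `‖f‖_A`, so the same bound holds for convolutions.
-/

variable {α E : Type*} [NormedAddCommGroup E] [NormedSpace ℝ E]

section LayerCake

variable [MeasurableSpace α] {μ : Measure α} {f : α → E} {p : α → ℝ} {P A : ℝ}

theorem setIntegral_Ioc_indicator_Iio_const [CompleteSpace E] {r : ℝ} (hr : r ∈ Icc 0 P) (v : E) :
    ∫ u in Ioc 0 P, (Iio r).indicator (fun _ ↦ v) u = r • v := by
  have h_inter : Ioc 0 P ∩ Iio r = Ioo 0 r := by
    ext u
    exact ⟨fun h ↦ ⟨h.1.1, h.2⟩, fun h ↦ ⟨⟨h.1, h.2.le.trans hr.2⟩, h.2⟩⟩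
  rw [setIntegral_indicator measurableSet_Iio, h_inter, setIntegral_const,
    Real.volume_real_Ioo_of_le hr.1, sub_zero]

theorem integral_smul_eq_integral_setIntegral_superlevel_s12 [SFinite μ] [CompleteSpace E]
    (hf : Integrable f μ) (hp : AEMeasurable p μ) (hpP : ∀ᵐ t ∂μ, p t ∈ Icc 0 P) :
    ∫ t, p t • f t ∂μ = ∫ u in Ioc 0 P, ∫ t in {t | u < p t}, f t ∂μ := by
  have h_subgraph :
      NullMeasurableSet {z : α × ℝ | z.2 < p z.1} (μ.prod (volume.restrict (Ioc 0 P))) :=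
    nullMeasurableSet_lt measurable_snd.aemeasurable hp.comp_fst
  calc ∫ t, p t • f t ∂μ
      = ∫ t, (∫ u in Ioc 0 P, {t | u < p t}.indicator f t) ∂μ :=
        integral_congr_ae <| hpP.mono fun t ht ↦
          (setIntegral_Ioc_indicator_Iio_const ht (f t)).symm
    _ = ∫ u in Ioc 0 P, ∫ t, {t | u < p t}.indicator f t ∂μ :=
        integral_integral_swap (f := fun t u ↦ {t | u < p t}.indicator f t)
          ((hf.comp_fst _).indicator₀ h_subgraph)
    _ = ∫ u in Ioc 0 P, ∫ t in {t | u < p t}, f t ∂μ :=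
        integral_congr_ae <| Eventually.of_forall fun u ↦
          integral_indicator₀ (nullMeasurableSet_lt aemeasurable_const hp)

theorem norm_integral_smul_le_of_forall_superlevel [SFinite μ] [CompleteSpace E]
    (hf : Integrable f μ) (hp : AEMeasurable p μ) (hP : 0 ≤ P) (hpP : ∀ᵐ t ∂μ, p t ∈ Icc 0 P)
    (hA : ∀ u, ‖∫ t in {t | u < p t}, f t ∂μ‖ ≤ A) :
    ‖∫ t, p t • f t ∂μ‖ ≤ A * P := by
  rw [integral_smul_eq_integral_setIntegral_superlevel_s12 hf hp hpP]
  simpa [hP] using norm_setIntegral_le_of_norm_le_const (μ := volume) (s := Ioc 0 P)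
    measure_Ioc_lt_top fun u _ ↦ hA u

end LayerCake

theorem exists_ae_eq_Ioc_of_ordConnected [ConditionallyCompleteLinearOrder α] [MeasurableSpace α]
    {μ : Measure α} [NullSingletonClass μ] {S : Set α} {a b : α} (hS : S.OrdConnected)
    (hab : a ≤ b) (hSab : S ⊆ Icc a b) :
    ∃ c ∈ Icc a b, ∃ d ∈ Icc a b, c ≤ d ∧ S =ᵐ[μ] Ioc c d := by
  rcases S.eq_empty_or_nonempty with rfl | hne
  · exact ⟨a, left_mem_Icc.2 hab, a, left_mem_Icc.2 hab, le_rfl, .of_eq (Ioc_self a).symm⟩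
  have h_below : BddBelow S := bddBelow_Icc.mono hSab
  have h_above : BddAbove S := bddAbove_Icc.mono hSab
  have h_Ioo : Ioo (sInf S) (sSup S) ⊆ S := by
    rintro x ⟨hx_inf, hx_sup⟩
    obtain ⟨y, hy, hyx⟩ := exists_lt_of_csInf_lt hne hx_inf
    obtain ⟨z, hz, hxz⟩ := exists_lt_of_lt_csSup hne hx_sup
    exact hS.out hy hz ⟨hyx.le, hxz.le⟩
  have h_Icc : S ⊆ Icc (sInf S) (sSup S) := subset_Icc_csInf_csSup h_below h_above
  have h_inf : a ≤ sInf S := le_csInf hne fun x hx ↦ (hSab hx).1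
  have h_sup : sSup S ≤ b := csSup_le hne fun x hx ↦ (hSab hx).2
  have h_le : sInf S ≤ sSup S := csInf_le_csSup hne h_below h_above
  exact ⟨sInf S, ⟨h_inf, h_le.trans h_sup⟩, sSup S, ⟨h_inf.trans h_le, h_sup⟩, h_le,
    (h_Icc.eventuallyLE.trans Ioc_ae_eq_Icc.symm.le).antisymm
      (Ioo_ae_eq_Ioc.symm.le.trans h_Ioo.eventuallyLE)⟩

theorem aemeasurable_restrict_of_quasiconcaveOn {μ : Measure ℝ} {S : Set ℝ} {p : ℝ → ℝ}
    (hS : MeasurableSet S) (hp : QuasiconcaveOn ℝ S p) : AEMeasurable p (μ.restrict S) := by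
  rw [aemeasurable_restrict_iff_comap_subtype hS]
  refine (measurable_of_Ioi fun u ↦ ?_).aemeasurable
  have h_preimage : p ∘ Subtype.val ⁻¹' Ioi u = (Subtype.val : S → ℝ) ⁻¹' {t ∈ S | u < p t} :=
    Set.ext fun t ↦ ⟨fun h ↦ ⟨t.2, h⟩, fun h ↦ h.2⟩
  rw [h_preimage]
  exact measurable_subtype_coe (hp.convex_gt u).ordConnected.measurableSet

theorem norm_le_norm_add_eVariationOn [LinearOrder α] {F : Type*} [SeminormedAddCommGroup F]
    {g : α → F} {S : Set α} {s t : α} (hg : BoundedVariationOn g S) (hs : s ∈ S) (ht : t ∈ S) :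
    ‖g t‖ ≤ ‖g s‖ + (eVariationOn g S).toReal :=
  calc ‖g t‖ ≤ ‖g s‖ + ‖g t - g s‖ := norm_le_norm_add_norm_sub' _ _
    _ ≤ ‖g s‖ + (eVariationOn g S).toReal := by
      rw [← dist_eq_norm]
      gcongr
      exact hg.dist_le ht hs

section IntervalIntegral

variable {μ : Measure ℝ} {f : ℝ → E} {g p : ℝ → ℝ} {a b s A P : ℝ}

theorem intervalIntegrable_smul_of_boundedVariationOn (hf : IntervalIntegrable f μ a b)
    (hg : BoundedVariationOn g [[a, b]]) : IntervalIntegrable (fun t ↦ g t • f t) μ a b := by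
  obtain ⟨p, q, hp, hq, rfl⟩ := hg.locallyBoundedVariationOn.exists_monotoneOn_sub_monotoneOn
  have h_meas : AEMeasurable (p - q) (μ.restrict (Ι a b)) :=
    ((aemeasurable_restrict_of_monotoneOn measurableSet_uIcc hp).sub
      (aemeasurable_restrict_of_monotoneOn measurableSet_uIcc hq)).mono_set uIoc_subset_uIcc
  rw [intervalIntegrable_iff] at hf ⊢
  exact Integrable.bdd_smul hf _ h_meas.aestronglyMeasurable <|
    ae_restrict_of_forall_mem measurableSet_uIoc fun t ht ↦
      norm_le_norm_add_eVariationOn hg left_mem_uIcc (uIoc_subset_uIcc ht)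

theorem intervalIntegrable_sub_smul_of_monotoneOn (hf : IntervalIntegrable f μ a b)
    (hp : MonotoneOn p [[a, b]]) (r : ℝ) :
    IntervalIntegrable (fun t ↦ (p t - r) • f t) μ a b := by
  have h_mono : MonotoneOn (fun t ↦ p t - r) [[a, b]] := fun x hx y hy hxy ↦
    sub_le_sub_right (hp hx hy hxy) r
  refine intervalIntegrable_smul_of_boundedVariationOn hf ?_
  simpa only [uIcc, inter_self, BoundedVariationOn] using
    h_mono.locallyBoundedVariationOn (a ⊓ b) (a ⊔ b) ⟨le_rfl, inf_le_sup⟩ ⟨inf_le_sup, le_rfl⟩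

variable [NullSingletonClass μ] [SFinite μ] [CompleteSpace E]

theorem norm_integral_smul_le_of_quasiconcaveOn (hab : a ≤ b) (hf : IntervalIntegrable f μ a b)
    (hp : QuasiconcaveOn ℝ (Icc a b) p) (hpP : ∀ t ∈ Icc a b, p t ∈ Icc 0 P)
    (hA : ∀ c ∈ Icc a b, ∀ d ∈ Icc a b, ‖∫ t in c..d, f t ∂μ‖ ≤ A) :
    ‖∫ t in a..b, p t • f t ∂μ‖ ≤ A * P := by
  have hpa : p a ∈ Icc 0 P := hpP a (left_mem_Icc.2 hab)
  rw [intervalIntegral.integral_of_le hab, ← integral_Icc_eq_integral_Ioc]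
  refine norm_integral_smul_le_of_forall_superlevel
    ((intervalIntegrable_iff_integrableOn_Icc_of_le hab).1 hf)
    (aemeasurable_restrict_of_quasiconcaveOn measurableSet_Icc hp) (hpa.1.trans hpa.2)
    (ae_restrict_of_forall_mem measurableSet_Icc hpP) fun u ↦ ?_
  obtain ⟨c, hc, d, hd, hcd, h_ae⟩ := exists_ae_eq_Ioc_of_ordConnected (μ := μ)
    (S := Icc a b ∩ {t | u < p t}) (hp.convex_gt u).ordConnected hab inter_subset_left
  rw [Measure.restrict_restrict' measurableSet_Icc, inter_comm, setIntegral_congr_set h_ae,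
    ← intervalIntegral.integral_of_le hcd]
  exact hA c hc d hd

theorem norm_integral_sub_smul_le_of_monotoneOn (hs : s ∈ Icc a b)
    (hf : IntervalIntegrable f μ a b) (hp : MonotoneOn p (Icc a b))
    (hA : ∀ c ∈ Icc a b, ∀ d ∈ Icc a b, ‖∫ t in c..d, f t ∂μ‖ ≤ A) :
    ‖∫ t in a..b, (p t - p s) • f t ∂μ‖ ≤ A * (p b - p a) := by
  have hab : a ≤ b := hs.1.trans hs.2
  have h_sub_left : Icc a s ⊆ Icc a b := Icc_subset_Icc_right hs.2
  have h_sub_right : Icc s b ⊆ Icc a b := Icc_subset_Icc_left hs.1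
  have hf_left : IntervalIntegrable f μ a s :=
    hf.mono_set (by rwa [uIcc_of_le hs.1, uIcc_of_le hab])
  have hf_right : IntervalIntegrable f μ s b :=
    hf.mono_set (by rwa [uIcc_of_le hs.2, uIcc_of_le hab])
  have h_left : ‖∫ t in a..s, (p t - p s) • f t ∂μ‖ ≤ A * (p s - p a) := by
    have h_anti : AntitoneOn (fun t ↦ p s - p t) (Icc a s) := fun x hx y hy hxy ↦
      sub_le_sub_left (hp (h_sub_left hx) (h_sub_left hy) hxy) _
    rw [← norm_neg, ← intervalIntegral.integral_neg]
    simp_rw [← neg_smul, neg_sub]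
    exact norm_integral_smul_le_of_quasiconcaveOn hs.1 hf_left
      (h_anti.quasiconcaveOn (convex_Icc a s))
      (fun t ht ↦ ⟨sub_nonneg.2 (hp (h_sub_left ht) hs ht.2),
        h_anti (left_mem_Icc.2 hs.1) ht ht.1⟩)
      fun c hc d hd ↦ hA c (h_sub_left hc) d (h_sub_left hd)
  have h_right : ‖∫ t in s..b, (p t - p s) • f t ∂μ‖ ≤ A * (p b - p s) := by
    have h_mono : MonotoneOn (fun t ↦ p t - p s) (Icc s b) := fun x hx y hy hxy ↦
      sub_le_sub_right (hp (h_sub_right hx) (h_sub_right hy) hxy) _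
    exact norm_integral_smul_le_of_quasiconcaveOn hs.2 hf_right
      (h_mono.quasiconcaveOn (convex_Icc s b))
      (fun t ht ↦ ⟨sub_nonneg.2 (hp hs (h_sub_right ht) ht.1),
        h_mono ht (right_mem_Icc.2 hs.2) ht.2⟩)
      fun c hc d hd ↦ hA c (h_sub_right hc) d (h_sub_right hd)
  rw [← uIcc_of_le hs.1] at h_sub_left
  rw [← uIcc_of_le hs.2] at h_sub_right
  rw [← intervalIntegral.integral_add_adjacent_intervals
    (intervalIntegrable_sub_smul_of_monotoneOn hf_left (hp.mono h_sub_left) _)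
    (intervalIntegrable_sub_smul_of_monotoneOn hf_right (hp.mono h_sub_right) _)]
  linarith [norm_add_le_of_le h_left h_right]

theorem norm_integral_smul_sub_smul_integral_le (hs : s ∈ [[a, b]])
    (hf : IntervalIntegrable f μ a b) (hg : BoundedVariationOn g [[a, b]])
    (hA : ∀ c ∈ [[a, b]], ∀ d ∈ [[a, b]], ‖∫ t in c..d, f t ∂μ‖ ≤ A) :
    ‖(∫ t in a..b, g t • f t ∂μ) - g s • ∫ t in a..b, f t ∂μ‖ ≤
      A * (eVariationOn g [[a, b]]).toReal := by
  wlog hab : a ≤ b generalizing a b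
  · rw [uIcc_comm] at hs hg hA ⊢
    rw [intervalIntegral.integral_symm b a, intervalIntegral.integral_symm b a, smul_neg,
      ← neg_sub', norm_neg]
    exact this hs hf.symm hg hA (le_of_not_ge hab)
  have hA_nonneg : 0 ≤ A := (norm_nonneg _).trans (hA s hs s hs)
  have h_gf := intervalIntegrable_smul_of_boundedVariationOn hf hg
  obtain ⟨p, q, hp, hq, rfl, h_var⟩ :=
    hg.locallyBoundedVariationOn.exists_monotoneOn_sub_monotoneOn'
  have h_const : IntervalIntegrable (fun t ↦ (p - q) s • f t) μ a b := hf.smul _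
  have h_split : (∫ t in a..b, (p - q) t • f t ∂μ) - (p - q) s • ∫ t in a..b, f t ∂μ =
      (∫ t in a..b, (p t - p s) • f t ∂μ) - ∫ t in a..b, (q t - q s) • f t ∂μ := by
    rw [← intervalIntegral.integral_smul, ← intervalIntegral.integral_sub h_gf h_const,
      ← intervalIntegral.integral_sub (intervalIntegrable_sub_smul_of_monotoneOn hf hp _)
        (intervalIntegrable_sub_smul_of_monotoneOn hf hq _)]
    refine intervalIntegral.integral_congr fun t _ ↦ ?_
    simp only [Pi.sub_apply]
    module
  have h_var_le : (p b - p a) + (q b - q a) ≤ (eVariationOn (p - q) [[a, b]]).toReal := by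
    rw [h_var a left_mem_uIcc b right_mem_uIcc]
    exact (le_abs_self _).trans (variationOnFromTo.abs_le_eVariationOn hg)
  rw [uIcc_of_le hab] at hs hA hp hq
  calc _ ≤ A * (p b - p a) + A * (q b - q a) := by
        rw [h_split]
        exact norm_sub_le_of_le (norm_integral_sub_smul_le_of_monotoneOn hs hf hp hA)
          (norm_integral_sub_smul_le_of_monotoneOn hs hf hq hA)
    _ = A * ((p b - p a) + (q b - q a)) := (mul_add _ _ _).symm
    _ ≤ _ := by gcongr

theorem norm_integral_smul_le_of_boundedVariationOn_univ (hf : IntervalIntegrable f μ a b)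
    (hg : BoundedVariationOn g univ) (s : ℝ)
    (hA : ∀ c ∈ [[a, b]], ∀ d ∈ [[a, b]], ‖∫ t in c..d, f t ∂μ‖ ≤ A) :
    ‖∫ t in a..b, g t • f t ∂μ‖ ≤ A * (‖g s‖ + 2 * (eVariationOn g univ).toReal) := by
  have hA_nonneg : 0 ≤ A := (norm_nonneg _).trans (hA a left_mem_uIcc a left_mem_uIcc)
  have h_var : (eVariationOn g [[a, b]]).toReal ≤ (eVariationOn g univ).toReal :=
    ENNReal.toReal_mono hg (eVariationOn.mono g (subset_univ _))
  have h_diff := norm_integral_smul_sub_smul_integral_le left_mem_uIcc hf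
    (hg.mono (subset_univ _)) hA
  have h_smul : ‖g a • ∫ t in a..b, f t ∂μ‖ ≤
      (‖g s‖ + (eVariationOn g univ).toReal) * A := by
    rw [norm_smul]
    exact mul_le_mul (norm_le_norm_add_eVariationOn hg (mem_univ s) (mem_univ a))
      (hA a left_mem_uIcc b right_mem_uIcc) (norm_nonneg _) (by positivity)
  calc _ ≤ A * (eVariationOn g [[a, b]]).toReal +
        (‖g s‖ + (eVariationOn g univ).toReal) * A :=
        (norm_le_norm_sub_add _ _).trans (add_le_add h_diff h_smul)
    _ ≤ A * (eVariationOn g univ).toReal + (‖g s‖ + (eVariationOn g univ).toReal) * A := by gcongr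
    _ = _ := by ring

theorem cauchy_map_integral_smul {l : Filter ℝ} [TendstoIxxClass Icc l l] {x₀ : ℝ}
    (hf : ∀ a b, IntervalIntegrable f μ a b) (hg : BoundedVariationOn g univ)
    (h : Cauchy (map (fun x ↦ ∫ t in x₀..x, f t ∂μ) l)) :
    Cauchy (map (fun x ↦ ∫ t in x₀..x, g t • f t ∂μ) l) := by
  have hgf : ∀ a b, IntervalIntegrable (fun t ↦ g t • f t) μ a b := fun a b ↦
    intervalIntegrable_smul_of_boundedVariationOn (hf a b) (hg.mono (subset_univ _))
  rw [Metric.cauchy_iff] at h ⊢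
  refine ⟨h.1.of_map.map _, fun ε hε ↦ ?_⟩
  obtain ⟨δ, hδ, hδε⟩ := exists_pos_mul_lt hε (‖g x₀‖ + 2 * (eVariationOn g univ).toReal)
  obtain ⟨S, hS, hS_dist⟩ := h.2 δ hδ
  obtain ⟨T, hT, hTS⟩ : ∃ T ∈ l, ∀ x ∈ T, ∀ y ∈ T, [[x, y]] ⊆ (∫ t in x₀..·, f t ∂μ) ⁻¹' S := by
    have h_uIcc := (tendsto_fst (f := l) (g := l)).uIcc tendsto_snd
    obtain ⟨T, hT, hTS⟩ := mem_prod_same_iff.1 (tendsto_smallSets_iff.1 h_uIcc _ hS)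
    exact ⟨T, hT, fun x hx y hy ↦ hTS (mk_mem_prod hx hy)⟩
  refine ⟨_, image_mem_map hT, ?_⟩
  rintro _ ⟨x, hx, rfl⟩ _ ⟨y, hy, rfl⟩
  have hA : ∀ c ∈ [[y, x]], ∀ d ∈ [[y, x]], ‖∫ t in c..d, f t ∂μ‖ ≤ δ := by
    intro c hc d hd
    rw [← intervalIntegral.integral_interval_sub_left (hf x₀ d) (hf x₀ c), ← dist_eq_norm]
    exact (hS_dist _ (hTS y hy x hx hd) _ (hTS y hy x hx hc)).le
  rw [dist_eq_norm, intervalIntegral.integral_interval_sub_left (hgf _ _) (hgf _ _)]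
  exact (norm_integral_smul_le_of_boundedVariationOn_univ (hf y x) hg x₀ hA).trans_lt <|
    (mul_comm _ _).trans_lt hδε

end IntervalIntegral

/-- `f` has improper integral `I` over the line: `∫ t in -T₁..T₂, f t` tends to `I` as `T₁` and `T₂`
tend to infinity independently of each other. -/
def HasImproperIntegral (f : ℝ → E) (I : E) : Prop :=
  Tendsto (fun T : ℝ × ℝ ↦ ∫ t in (-T.1)..T.2, f t) (atTop ×ˢ atTop) (𝓝 I)

/-- Locally integrable functions whose indefinite integral has finite limits at `±∞`, that is, those
with a possibly only conditionally convergent integral over the line. -/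
structure ImproperlyIntegrable (f : ℝ → E) : Prop where
  intervalIntegrable : ∀ a b, IntervalIntegrable f volume a b
  tendsto_atTop : ∃ c, Tendsto (fun x ↦ ∫ t in (0 : ℝ)..x, f t) atTop (𝓝 c)
  tendsto_atBot : ∃ c, Tendsto (fun x ↦ ∫ t in (0 : ℝ)..x, f t) atBot (𝓝 c)

/-- The Alexiewicz norm `‖f‖_A`, the largest norm of an integral of `f` over a compact interval. As
the supremum is taken in `ℝ`, it is `0` when these integrals are unbounded. -/
noncomputable def alexiewiczNorm (f : ℝ → E) : ℝ :=
  sSup {r : ℝ | ∃ c d : ℝ, c ≤ d ∧ r = ‖∫ t in c..d, f t‖}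

variable {f : ℝ → E} {g : ℝ → ℝ} {I J : E}

theorem HasImproperIntegral.comp_sub_left (h : HasImproperIntegral f I) (x : ℝ) :
    HasImproperIntegral (fun t ↦ f (x - t)) I := by
  have h_fst : Tendsto (fun T : ℝ × ℝ ↦ -x + T.2) (atTop ×ˢ atTop) atTop :=
    tendsto_atTop_add_const_left _ _ tendsto_snd
  have h_snd : Tendsto (fun T : ℝ × ℝ ↦ x + T.1) (atTop ×ˢ atTop) atTop :=
    tendsto_atTop_add_const_left _ _ tendsto_fst
  refine (h.comp (h_fst.prodMk h_snd)).congr fun T ↦ ?_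
  rw [intervalIntegral.integral_comp_sub_left]
  simp [sub_eq_add_neg, add_comm]

theorem alexiewiczNorm_comp_sub_left (f : ℝ → E) (x : ℝ) :
    alexiewiczNorm (fun t ↦ f (x - t)) = alexiewiczNorm f := by
  unfold alexiewiczNorm
  congr 1
  ext r
  constructor
  · rintro ⟨c, d, hcd, rfl⟩
    exact ⟨x - d, x - c, sub_le_sub_left hcd x, by
      rw [intervalIntegral.integral_comp_sub_left]⟩
  · rintro ⟨c, d, hcd, rfl⟩
    exact ⟨x - d, x - c, sub_le_sub_left hcd x, by
      rw [intervalIntegral.integral_comp_sub_left, sub_sub_cancel, sub_sub_cancel]⟩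

namespace ImproperlyIntegrable

theorem exists_hasImproperIntegral (hf : ImproperlyIntegrable f) :
    ∃ I, HasImproperIntegral f I := by
  obtain ⟨c₁, hc₁⟩ := hf.tendsto_atTop
  obtain ⟨c₂, hc₂⟩ := hf.tendsto_atBot
  have h_neg : Tendsto (fun T : ℝ × ℝ ↦ -T.1) (atTop ×ˢ atTop) atBot :=
    tendsto_neg_atTop_atBot.comp tendsto_fst
  exact ⟨c₁ - c₂, ((hc₁.comp tendsto_snd).sub (hc₂.comp h_neg)).congr fun T ↦
    intervalIntegral.integral_interval_sub_left
      (hf.intervalIntegrable _ _) (hf.intervalIntegrable _ _)⟩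

theorem comp_sub_left (hf : ImproperlyIntegrable f) (x : ℝ) :
    ImproperlyIntegrable fun t ↦ f (x - t) := by
  have h_primitive (y : ℝ) : (∫ t in (0 : ℝ)..x, f t) - (∫ t in (0 : ℝ)..(x - y), f t) =
      ∫ t in (0 : ℝ)..y, f (x - t) := by
    rw [intervalIntegral.integral_comp_sub_left, sub_zero,
      intervalIntegral.integral_interval_sub_left
        (hf.intervalIntegrable _ _) (hf.intervalIntegrable _ _)]
  have h_atTop : Tendsto (fun y ↦ x - y) atTop atBot := by
    simpa only [sub_eq_add_neg] using
      tendsto_atBot_add_const_left atTop x tendsto_neg_atTop_atBot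
  have h_atBot : Tendsto (fun y ↦ x - y) atBot atTop := by
    simpa only [sub_eq_add_neg] using
      tendsto_atTop_add_const_left atBot x tendsto_neg_atBot_atTop
  obtain ⟨c₁, hc₁⟩ := hf.tendsto_atTop
  obtain ⟨c₂, hc₂⟩ := hf.tendsto_atBot
  exact
    { intervalIntegrable a b := by
        simpa using (hf.intervalIntegrable (x - a) (x - b)).comp_sub_left x
      tendsto_atTop :=
        ⟨_, (tendsto_const_nhds.sub (hc₂.comp h_atTop)).congr h_primitive⟩
      tendsto_atBot :=
        ⟨_, (tendsto_const_nhds.sub (hc₁.comp h_atBot)).congr h_primitive⟩ }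

theorem smul [CompleteSpace E] (hf : ImproperlyIntegrable f) (hg : BoundedVariationOn g univ) :
    ImproperlyIntegrable fun t ↦ g t • f t where
  intervalIntegrable a b := intervalIntegrable_smul_of_boundedVariationOn
    (hf.intervalIntegrable a b) (hg.mono (subset_univ _))
  tendsto_atTop := cauchy_map_iff_exists_tendsto.1 <| cauchy_map_integral_smul
    hf.intervalIntegrable hg (cauchy_map_iff_exists_tendsto.2 hf.tendsto_atTop)
  tendsto_atBot := cauchy_map_iff_exists_tendsto.1 <| cauchy_map_integral_smul
    hf.intervalIntegrable hg (cauchy_map_iff_exists_tendsto.2 hf.tendsto_atBot)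

theorem bddAbove_norm_integral (hf : ImproperlyIntegrable f) :
    BddAbove {r : ℝ | ∃ c d : ℝ, c ≤ d ∧ r = ‖∫ t in c..d, f t‖} := by
  have h_bounded : Bornology.IsBounded (range fun x ↦ ∫ t in (0 : ℝ)..x, f t) := by
    rw [(intervalIntegral.continuous_primitive
      hf.intervalIntegrable 0).isBounded_range_iff_isBigO_atTop_atBot]
    obtain ⟨c₁, hc₁⟩ := hf.tendsto_atTop
    obtain ⟨c₂, hc₂⟩ := hf.tendsto_atBot
    exact ⟨hc₁.isBigO_one ℝ, hc₂.isBigO_one ℝ⟩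
  obtain ⟨C, hC⟩ := Metric.isBounded_range_iff.1 h_bounded
  refine ⟨C, ?_⟩
  rintro _ ⟨c, d, -, rfl⟩
  rw [← intervalIntegral.integral_interval_sub_left
    (hf.intervalIntegrable 0 d) (hf.intervalIntegrable 0 c), ← dist_eq_norm]
  exact hC d c

theorem norm_integral_le_alexiewiczNorm (hf : ImproperlyIntegrable f) (c d : ℝ) :
    ‖∫ t in c..d, f t‖ ≤ alexiewiczNorm f := by
  rcases le_total c d with hcd | hdc
  · exact le_csSup hf.bddAbove_norm_integral ⟨c, d, hcd, rfl⟩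
  · rw [intervalIntegral.integral_symm, norm_neg]
    exact le_csSup hf.bddAbove_norm_integral ⟨d, c, hdc, rfl⟩

variable [CompleteSpace E]

theorem norm_sub_smul_le (hf : ImproperlyIntegrable f) (hg : BoundedVariationOn g univ)
    (hI : HasImproperIntegral f I) (hJ : HasImproperIntegral (fun t ↦ g t • f t) J) (s : ℝ) :
    ‖J - g s • I‖ ≤ alexiewiczNorm f * (eVariationOn g univ).toReal := by
  have h_nonneg : 0 ≤ alexiewiczNorm f :=
    (norm_nonneg _).trans (hf.norm_integral_le_alexiewiczNorm 0 0)
  have h_fst : ∀ᶠ T : ℝ × ℝ in atTop ×ˢ atTop, -s ≤ T.1 :=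
    tendsto_fst.eventually_ge_atTop (-s)
  have h_snd : ∀ᶠ T : ℝ × ℝ in atTop ×ˢ atTop, s ≤ T.2 := tendsto_snd.eventually_ge_atTop s
  refine le_of_tendsto (Tendsto.sub hJ (Tendsto.const_smul hI (g s))).norm ?_
  filter_upwards [h_fst, h_snd] with T hT₁ hT₂
  calc _ ≤ alexiewiczNorm f * (eVariationOn g [[-T.1, T.2]]).toReal :=
        norm_integral_smul_sub_smul_integral_le (mem_uIcc_of_le (neg_le.1 hT₁) hT₂)
          (hf.intervalIntegrable _ _) (hg.mono (subset_univ _))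
          fun c _ d _ ↦ hf.norm_integral_le_alexiewiczNorm c d
    _ ≤ _ := mul_le_mul_of_nonneg_left
        (ENNReal.toReal_mono hg (eVariationOn.mono g (subset_univ _))) h_nonneg

theorem norm_le_mul_iInf_add (hf : ImproperlyIntegrable f) (hg : BoundedVariationOn g univ)
    (hI : HasImproperIntegral f I) (hJ : HasImproperIntegral (fun t ↦ g t • f t) J) :
    ‖J‖ ≤ ‖I‖ * (⨅ t, |g t|) + alexiewiczNorm f * (eVariationOn g univ).toReal := by
  rw [Real.mul_iInf_of_nonneg (norm_nonneg I), ← sub_le_iff_le_add]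
  refine le_ciInf fun s ↦ sub_le_iff_le_add.2 ?_
  calc ‖J‖ ≤ ‖g s • I‖ + ‖J - g s • I‖ := norm_le_norm_add_norm_sub' _ _
    _ ≤ ‖I‖ * |g s| + alexiewiczNorm f * (eVariationOn g univ).toReal := by
      rw [norm_smul, Real.norm_eq_abs, mul_comm]
      gcongr
      exact hf.norm_sub_smul_le hg hI hJ s

end ImproperlyIntegrable

theorem stmt12_general [CompleteSpace E] (f : ℝ → E) (g : ℝ → ℝ) (hf : ImproperlyIntegrable f)
    (hg : BoundedVariationOn g univ) :
    ∃ If : E, ∃ fg : ℝ → E, HasImproperIntegral f If ∧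
      ∀ x : ℝ, HasImproperIntegral (fun t ↦ g t • f (x - t)) (fg x) ∧
        ‖fg x‖ ≤ ‖If‖ * (⨅ t, |g t|) + alexiewiczNorm f * (eVariationOn g univ).toReal := by
  obtain ⟨If, hIf⟩ := hf.exists_hasImproperIntegral
  choose fg hfg using fun x ↦ ((hf.comp_sub_left x).smul hg).exists_hasImproperIntegral
  refine ⟨If, fg, hIf, fun x ↦ ⟨hfg x, ?_⟩⟩
  rw [← alexiewiczNorm_comp_sub_left f x]
  exact (hf.comp_sub_left x).norm_le_mul_iInf_add hg (hIf.comp_sub_left x) (hfg x)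

/-- Proposition 8(a): for `f` with convergent indefinite integral at `±∞` and `g` of
bounded variation on `ℝ`, the improper convolution `f∗g(x)` exists for every `x` and
`|f∗g(x)| ≤ |∫_{-∞}^∞ f| · inf |g| + ‖f‖_A · V g`. -/
theorem stmt12 (f : ℝ → ℂ) (g : ℝ → ℝ)
    (hf : ∀ a b : ℝ, IntegrableOn f (Set.Icc a b))
    (hF₁ : ∃ c : ℂ, Tendsto (fun x : ℝ => ∫ t in (0:ℝ)..x, f t) atTop (nhds c))
    (hF₂ : ∃ c : ℂ, Tendsto (fun x : ℝ => ∫ t in (0:ℝ)..x, f t) atBot (nhds c))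
    (hg : BoundedVariationOn g Set.univ) :
    ∃ If : ℂ, ∃ fg : ℝ → ℂ,
      Tendsto (fun T : ℝ × ℝ => ∫ t in (-T.1)..T.2, f t) (atTop ×ˢ atTop) (nhds If) ∧
      ∀ x : ℝ,
        Tendsto (fun T : ℝ × ℝ => ∫ t in (-T.1)..T.2, f (x - t) * ((g t : ℝ) : ℂ))
          (atTop ×ˢ atTop) (nhds (fg x)) ∧
        ‖fg x‖ ≤ ‖If‖ * (⨅ t : ℝ, |g t|) +
          sSup {r : ℝ | ∃ c d : ℝ, c ≤ d ∧ r = ‖∫ t in c..d, f t‖} *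
            (eVariationOn g Set.univ).toReal := by
  simp_rw [mul_comm (f _), ← Complex.real_smul]
  exact stmt12_general f g ⟨fun _ _ ↦ (hf _ _).intervalIntegrable, hF₁, hF₂⟩ hg
end
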